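/- Let c₀, c₁, c₂, d ∈ EuclideanSpace ℝ (Fin 3) and r > 0. Suppose each cᵢ has third coordinate 1/2, the three points c₀, c₁, c₂ are pairwise at distance 1 (so the three radius-1/2 balls centered at them are pairwise externally tangent and all tangent to the plane x 2 = 0), the point d has third coordinate r, and dist(d, cᵢ) = r + 1/2 for each i = 0, 1, 2 (so the radius-r ball centered at d is tangent to the plane and externally tangent to all three). Then r = 1/6. -/

import Mathlib

lemma planar_aux (a b e f g h r : ℝ)
    (A : a*a+b*b = 2*r) (B : e*e+f*f = 2*r) (C : g*g+h*h = 2*r)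
    (D : a*e+b*f = 2*r-1/2) (E : a*g+b*h = 2*r-1/2) (F : e*g+f*h = 2*r-1/2) : r = 1/6 := by
  have key : (a*a+b*b)*((e*e+f*f)*(g*g+h*h) - (e*g+f*h)*(e*g+f*h))
      - (a*e+b*f)*((a*e+b*f)*(g*g+h*h) - (e*g+f*h)*(a*g+b*h))
      + (a*g+b*h)*((a*e+b*f)*(e*g+f*h) - (e*e+f*f)*(a*g+b*h)) = 0 := by ring
  rw [A, B, C, D, E, F] at key
  ring_nf at key
  linarith

/-- The ball tangent to the plane {x : x 2 = 0} and externally tangent to three mutually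
tangent radius-1/2 balls tangent to that plane has radius 1/6. -/
theorem radius_of_fourth_tangent_ball (c : Fin 3 → EuclideanSpace ℝ (Fin 3))
    (d : EuclideanSpace ℝ (Fin 3)) (r : ℝ) (hr : 0 < r)
    (hc : ∀ i, c i 2 = 1 / 2)
    (hpair : ∀ i j, i ≠ j → dist (c i) (c j) = 1)
    (hd : d 2 = r)
    (htan : ∀ i, dist d (c i) = r + 1 / 2) :
    r = 1 / 6 := by
  have sq : ∀ x y : EuclideanSpace ℝ (Fin 3),
      dist x y ^ 2 = (x 0 - y 0)^2 + (x 1 - y 1)^2 + (x 2 - y 2)^2 := by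
    intro x y
    rw [EuclideanSpace.dist_eq, Real.sq_sqrt (by positivity)]
    simp [Fin.sum_univ_three, Real.dist_eq, sq_abs]
  have T : ∀ i, (r+1/2)^2 = (d 0 - c i 0)^2 + (d 1 - c i 1)^2 + (r - 1/2)^2 := by
    intro i
    have := sq d (c i)
    rwa [htan, hd, hc] at this
  have P : ∀ i j, i ≠ j → (1:ℝ)^2 = (c i 0 - c j 0)^2 + (c i 1 - c j 1)^2 := by
    intro i j hij
    have := sq (c i) (c j)
    rw [hpair i j hij, hc, hc] at this
    linarith
  have t0 := T 0
  have t1 := T 1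
  have t2 := T 2
  have p01 := P 0 1 (by decide)
  have p02 := P 0 2 (by decide)
  have p12 := P 1 2 (by decide)
  apply planar_aux (d 0 - c 0 0) (d 1 - c 0 1) (d 0 - c 1 0) (d 1 - c 1 1)
    (d 0 - c 2 0) (d 1 - c 2 1) r <;> linarith
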